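/- arXiv:2410.05462 — 2 statements merged into one kernel-verified Lean document; each statement's English description precedes it below -/
import Mathlib

section
/- Let 1 ≤ p ≤ 2 and let K be an n×d real matrix with rows K_1,…,K_n. Then the sum over j = 1,…,n of the ℓ_p-sensitivities σ^{(p)}_j(K) is at most d. -/
/-- The `ℓ_p`-sensitivity of row `j` of an `n × d` real matrix `K`:
`σ^{(p)}_j(K) = sup { |⟨K_j, v⟩|^p / ∑_ℓ |⟨K_ℓ, v⟩|^p : v ∈ ℝ^d, Kv ≠ 0 }`. -/
noncomputable def lpSens {n d : ℕ} (p : ℝ) (K : Matrix (Fin n) (Fin d) ℝ) (j : Fin n) : ℝ :=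
  sSup {x : ℝ | ∃ v : Fin d → ℝ, K.mulVec v ≠ 0 ∧
    x = |∑ i, K j i * v i| ^ p / ∑ ℓ, |∑ i, K ℓ i * v i| ^ p}

open Matrix in
/-- The Lewis functional `R ↦ ∑ j, ‖(k R)_j‖₂ ^ (2q)` of the matrix `k`. -/
noncomputable def lewisFun {ι : Type*} [Fintype ι] {d : ℕ} (k : Matrix ι (Fin d) ℝ) (q : ℝ)
    (R : Matrix (Fin d) (Fin d) ℝ) : ℝ :=
  ∑ j, ((k * R) j ⬝ᵥ (k * R) j) ^ q

section Lewis

open Matrix Filter Topology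

lemma dotProduct_self_nonneg_real {m : Type*} [Fintype m] (u : m → ℝ) : 0 ≤ u ⬝ᵥ u :=
  Finset.sum_nonneg fun i _ => mul_self_nonneg (u i)

lemma dotProduct_sq_le {m : Type*} [Fintype m] (u y : m → ℝ) :
    (u ⬝ᵥ y) ^ 2 ≤ (u ⬝ᵥ u) * (y ⬝ᵥ y) := by
  have h := Finset.sum_mul_sq_le_sq_mul_sq Finset.univ u y
  simpa [dotProduct, pow_two] using h

lemma add_rpow_le_rpow_add_mul {q s h : ℝ} (hq : 0 ≤ q) (hq1 : q ≤ 1) (hs : 0 < s) (hh : 0 ≤ h) :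
    (s + h) ^ q ≤ s ^ q + q * (s ^ (q - 1) * h) := by
  have h1 := rpow_one_add_le_one_add_mul_self (s := h / s) (p := q)
    (by linarith [div_nonneg hh hs.le]) hq hq1
  have h2 : s + h = s * (1 + h / s) := by field_simp
  rw [h2, Real.mul_rpow hs.le (by positivity), Real.rpow_sub_one hs.ne']
  calc s ^ q * (1 + h / s) ^ q ≤ s ^ q * (1 + q * (h / s)) := by gcongr
    _ = _ := by ring

lemma rpow_sub_one_mul_sq_le {q s a Y : ℝ} (hq1 : q ≤ 1) (hs : 0 ≤ s) (hY : 0 ≤ Y)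
    (h : a ^ 2 ≤ s * Y) : s ^ (q - 1) * a ^ 2 ≤ Y ^ (1 - q) * (a ^ 2) ^ q := by
  rcases eq_or_ne a 0 with rfl | ha
  · simp only [ne_eq, OfNat.ofNat_ne_zero, not_false_eq_true, zero_pow, mul_zero]
    positivity
  have ha2 : 0 < a ^ 2 := by positivity
  have hs' : 0 < s := by
    rcases hs.eq_or_lt with rfl | h0
    · linarith [zero_mul Y]
    · exact h0
  have h1 : (a ^ 2) ^ (1 - q) ≤ s ^ (1 - q) * Y ^ (1 - q) := by
    rw [← Real.mul_rpow hs hY]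
    exact Real.rpow_le_rpow ha2.le h (by linarith)
  have h2 : s ^ (q - 1) * s ^ (1 - q) = 1 := by
    rw [← Real.rpow_add hs']; simp
  have h3 : (a ^ 2) ^ (1 - q) * (a ^ 2) ^ q = a ^ 2 := by
    rw [← Real.rpow_add ha2]; simp
  calc s ^ (q - 1) * a ^ 2 = s ^ (q - 1) * ((a ^ 2) ^ (1 - q) * (a ^ 2) ^ q) := by rw [h3]
    _ ≤ s ^ (q - 1) * ((s ^ (1 - q) * Y ^ (1 - q)) * (a ^ 2) ^ q) := by gcongr
    _ = (s ^ (q - 1) * s ^ (1 - q)) * (Y ^ (1 - q) * (a ^ 2) ^ q) := by ring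
    _ = _ := by rw [h2, one_mul]

lemma eq_zero_of_mul_eq_zero_of_injective {ι : Type*} {d : ℕ} {k : Matrix ι (Fin d) ℝ}
    (hk : Function.Injective k.mulVec) {R : Matrix (Fin d) (Fin d) ℝ} (h : k * R = 0) : R = 0 := by
  ext i a
  have : k *ᵥ (fun i => R i a) = k *ᵥ 0 := by
    rw [mulVec_zero]
    ext j
    exact congrFun (congrFun h j) a
  exact congrFun (hk this) i

lemma mul_one_add_smul_vecMulVec_row {ι : Type*} {d : ℕ} (U : Matrix ι (Fin d) ℝ)
    (t : ℝ) (y : Fin d → ℝ) (j : ι) :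
    (U * (1 + t • vecMulVec y y) : Matrix ι (Fin d) ℝ) j = U j + (t * (U j ⬝ᵥ y)) • y := by
  rw [Matrix.mul_add, Matrix.mul_one]
  ext a
  simp only [Matrix.add_apply, Matrix.smul_apply,
    Matrix.mul_apply, vecMulVec_apply, Pi.add_apply, Pi.smul_apply, smul_eq_mul, dotProduct,
    Finset.mul_sum, Finset.sum_mul]
  congr 1
  exact Finset.sum_congr rfl fun i _ => by ring

variable {ι : Type*} [Fintype ι] {d : ℕ}

lemma continuous_lewisFun (k : Matrix ι (Fin d) ℝ) {q : ℝ} (hq : 0 ≤ q) :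
    Continuous (lewisFun k q) := by
  unfold lewisFun dotProduct
  refine continuous_finsetSum _ fun j _ => Continuous.rpow_const ?_ fun _ => Or.inr hq
  refine continuous_finsetSum _ fun i _ => ?_
  have : Continuous fun R : Matrix (Fin d) (Fin d) ℝ => (k * R) j i :=
    (continuous_const.matrix_mul continuous_id).matrix_elem j i
  exact this.mul this

lemma entry_sq_rpow_le_lewisFun (k : Matrix ι (Fin d) ℝ) {q : ℝ} (hq : 0 ≤ q)
    (R : Matrix (Fin d) (Fin d) ℝ) (j : ι) (a : Fin d) :
    (((k * R) j a) ^ 2) ^ q ≤ lewisFun k q R := by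
  have h1 : ((k * R) j a) ^ 2 ≤ (k * R) j ⬝ᵥ (k * R) j := by
    rw [pow_two]
    exact Finset.single_le_sum (f := fun a => (k * R) j a * (k * R) j a)
      (fun i _ => mul_self_nonneg _) (Finset.mem_univ a)
  refine (Real.rpow_le_rpow (sq_nonneg _) h1 hq).trans ?_
  exact Finset.single_le_sum (f := fun j => ((k * R) j ⬝ᵥ (k * R) j) ^ q)
    (fun i _ => Real.rpow_nonneg (dotProduct_self_nonneg_real _) _) (Finset.mem_univ j)

/-- The Lewis functional attains its minimum over matrices of determinant one. -/
lemma exists_lewisFun_min (k : Matrix ι (Fin d) ℝ) (hk : Function.Injective k.mulVec)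
    {q : ℝ} (hq : 0 < q) :
    ∃ R : Matrix (Fin d) (Fin d) ℝ, R.det = 1 ∧
      ∀ R' : Matrix (Fin d) (Fin d) ℝ, R'.det = 1 → lewisFun k q R ≤ lewisFun k q R' := by
  let f : Matrix (Fin d) (Fin d) ℝ →ₗ[ℝ] (ι → Fin d → ℝ) :=
    { toFun := fun R => k * R
      map_add' := fun A B => Matrix.mul_add k A B
      map_smul' := fun c A => Matrix.mul_smul k c A }
  have hf : Topology.IsClosedEmbedding f := by
    refine LinearMap.isClosedEmbedding_of_injective (LinearMap.ker_eq_bot'.2 fun R hR => ?_)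
    exact eq_zero_of_mul_eq_zero_of_injective hk hR
  let C := lewisFun k q 1
  have hC : 0 ≤ C := Finset.sum_nonneg fun j _ => Real.rpow_nonneg (dotProduct_self_nonneg_real _) _
  let M := √(C ^ q⁻¹)
  let box : Set (ι → Fin d → ℝ) :=
    Set.univ.pi fun _ => Set.univ.pi fun _ => Set.Icc (-M) M
  have hbox : IsCompact box :=
    isCompact_univ_pi fun _ => isCompact_univ_pi fun _ => isCompact_Icc
  have hmem : ∀ R, lewisFun k q R ≤ C → f R ∈ box := by
    intro R hR j _ a _
    have h1 := (entry_sq_rpow_le_lewisFun k hq.le R j a).trans hR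
    have h2 : ((k * R) j a) ^ 2 ≤ C ^ q⁻¹ := by
      rwa [Real.le_rpow_inv_iff_of_pos (sq_nonneg _) hC hq]
    exact abs_le.1 (Real.abs_le_sqrt h2)
  have hcomp : IsCompact ({R : Matrix (Fin d) (Fin d) ℝ | R.det = 1} ∩ f ⁻¹' box) :=
    (hf.isCompact_preimage hbox).inter_left
      (isClosed_eq (continuous_id.matrix_det) continuous_const)
  obtain ⟨R, hR, hmin⟩ := hcomp.exists_isMinOn
    ⟨1, det_one, hmem 1 le_rfl⟩ (continuous_lewisFun k hq.le).continuousOn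
  refine ⟨R, hR.1, fun R' hR' => ?_⟩
  rcases le_or_gt (lewisFun k q R') C with h | h
  · exact hmin ⟨hR', hmem R' h⟩
  · exact le_trans (hmin ⟨det_one, hmem 1 le_rfl⟩) h.le

lemma lewisFun_smul (k : Matrix ι (Fin d) ℝ) (q c : ℝ)
    (R : Matrix (Fin d) (Fin d) ℝ) :
    lewisFun k q (c • R) = (c ^ 2) ^ q * lewisFun k q R := by
  unfold lewisFun
  rw [Finset.mul_sum]
  refine Finset.sum_congr rfl fun j _ => ?_
  rw [← Real.mul_rpow (sq_nonneg c) (dotProduct_self_nonneg_real _), Matrix.mul_smul]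
  congr 1
  change (c • (k * R) j) ⬝ᵥ (c • (k * R) j) = _
  rw [smul_dotProduct, dotProduct_smul, smul_eq_mul, smul_eq_mul]
  ring

/-- By homogeneity, a minimizer on determinant one bounds the functional on positive
determinants. -/
lemma lewisFun_min_mul_le (k : Matrix ι (Fin d) ℝ) {q : ℝ} (hd : 0 < d)
    {R : Matrix (Fin d) (Fin d) ℝ}
    (hmin : ∀ R' : Matrix (Fin d) (Fin d) ℝ, R'.det = 1 → lewisFun k q R ≤ lewisFun k q R')
    (R' : Matrix (Fin d) (Fin d) ℝ) (hR' : 0 < R'.det) :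
    lewisFun k q R * R'.det ^ (2 * q / d) ≤ lewisFun k q R' := by
  set D := R'.det with hD
  have hd' : (d : ℝ) ≠ 0 := by positivity
  set c := D ^ (-(1 / d : ℝ)) with hc
  have hdet : (c • R').det = 1 := by
    rw [det_smul, Fintype.card_fin, ← hD, hc, ← Real.rpow_natCast, ← Real.rpow_mul hR'.le]
    have : -(1 / d : ℝ) * d = -1 := by field_simp
    rw [this, Real.rpow_neg_one, inv_mul_cancel₀ hR'.ne']
  have h := hmin _ hdet
  rw [lewisFun_smul] at h
  have h1 : (c ^ 2) ^ q * D ^ (2 * q / d) = 1 := by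
    rw [hc, ← Real.rpow_natCast, ← Real.rpow_mul hR'.le, ← Real.rpow_mul hR'.le,
      ← Real.rpow_add hR']
    have : -(1 / d : ℝ) * (2 : ℕ) * q + 2 * q / d = 0 := by push_cast; ring
    rw [this, Real.rpow_zero]
  calc lewisFun k q R * D ^ (2 * q / d)
      ≤ ((c ^ 2) ^ q * lewisFun k q R') * D ^ (2 * q / d) := by gcongr
    _ = ((c ^ 2) ^ q * D ^ (2 * q / d)) * lewisFun k q R' := by ring
    _ = _ := by rw [h1, one_mul]

lemma det_one_add_smul_vecMulVec (t : ℝ) (y : Fin d → ℝ) :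
    (1 + t • vecMulVec y y : Matrix (Fin d) (Fin d) ℝ).det = 1 + t * (y ⬝ᵥ y) := by
  rw [← smul_vecMulVec, vecMulVec_eq Unit, det_one_add_replicateCol_mul_replicateRow,
    dotProduct_smul, smul_eq_mul]

lemma lewisFun_perturb_le (k : Matrix ι (Fin d) ℝ) {q : ℝ} (hq : 0 < q) (hq1 : q ≤ 1)
    (R : Matrix (Fin d) (Fin d) ℝ) (y : Fin d → ℝ) {t : ℝ} (ht : 0 ≤ t) :
    lewisFun k q (R * (1 + t • vecMulVec y y)) ≤ lewisFun k q R +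
      q * ((∑ j, ((k * R) j ⬝ᵥ (k * R) j) ^ (q - 1) * ((k * R) j ⬝ᵥ y) ^ 2) *
        (2 * t + t ^ 2 * (y ⬝ᵥ y))) := by
  unfold lewisFun
  rw [Finset.sum_mul, Finset.mul_sum, ← Finset.sum_add_distrib]
  refine Finset.sum_le_sum fun j _ => ?_
  rw [← Matrix.mul_assoc, mul_one_add_smul_vecMulVec_row]
  set u := (k * R) j
  have hY := dotProduct_self_nonneg_real y
  have hexp : (u + (t * (u ⬝ᵥ y)) • y) ⬝ᵥ (u + (t * (u ⬝ᵥ y)) • y) =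
      u ⬝ᵥ u + (u ⬝ᵥ y) ^ 2 * (2 * t + t ^ 2 * (y ⬝ᵥ y)) := by
    simp only [add_dotProduct, dotProduct_add, smul_dotProduct, dotProduct_smul, smul_eq_mul,
      dotProduct_comm y u]
    ring
  rw [hexp]
  rcases (dotProduct_self_nonneg_real u).eq_or_lt with h0 | h0
  · have : u = 0 := dotProduct_self_eq_zero.1 h0.symm
    simp [this]
  · rw [mul_assoc]
    exact add_rpow_le_rpow_add_mul hq.le hq1 h0 (by positivity)

/-- First-order optimality of a minimizer of the Lewis functional. -/
lemma lewisFun_min_mul_dotProduct_le (k : Matrix ι (Fin d) ℝ) {q : ℝ} (hq : 0 < q) (hq1 : q ≤ 1)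
    (hd : 0 < d) {R : Matrix (Fin d) (Fin d) ℝ} (hR : R.det = 1)
    (hmin : ∀ R' : Matrix (Fin d) (Fin d) ℝ, R'.det = 1 → lewisFun k q R ≤ lewisFun k q R')
    (y : Fin d → ℝ) :
    lewisFun k q R / d * (y ⬝ᵥ y) ≤
      ∑ j, ((k * R) j ⬝ᵥ (k * R) j) ^ (q - 1) * ((k * R) j ⬝ᵥ y) ^ 2 := by
  set B := ∑ j, ((k * R) j ⬝ᵥ (k * R) j) ^ (q - 1) * ((k * R) j ⬝ᵥ y) ^ 2
  set F := lewisFun k q R with hF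
  set Y := y ⬝ᵥ y with hYdef
  have hY : 0 ≤ Y := dotProduct_self_nonneg_real y
  have hF0 : 0 ≤ F := Finset.sum_nonneg fun j _ => Real.rpow_nonneg (dotProduct_self_nonneg_real _) _
  have hd' : (0 : ℝ) < d := by exact_mod_cast hd
  have key : ∀ t : ℝ, 0 < t → F / d * Y / (1 + t * Y) ≤ B * (1 + t * Y / 2) := by
    intro t ht
    have h1 := lewisFun_perturb_le k hq hq1 R y ht.le
    have hs : 0 < 1 + t * Y := by positivity
    have hdet : (R * (1 + t • vecMulVec y y)).det = 1 + t * Y := by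
      rw [det_mul, hR, one_mul, det_one_add_smul_vecMulVec]
    have h2 := lewisFun_min_mul_le k hd hmin _ (hdet ▸ hs)
    rw [hdet] at h2
    have h3 : 1 + 2 * q / d * (t * Y / (1 + t * Y)) ≤ (1 + t * Y) ^ (2 * q / d) := by
      rw [Real.rpow_def_of_pos hs]
      have h4 := Real.add_one_le_exp (Real.log (1 + t * Y) * (2 * q / d))
      have h5 := Real.one_sub_inv_le_log_of_pos hs
      have h6 : t * Y / (1 + t * Y) = 1 - (1 + t * Y)⁻¹ := by field_simp; ring
      have h7 : 2 * q / d * (1 - (1 + t * Y)⁻¹) ≤ 2 * q / d * Real.log (1 + t * Y) := by gcongr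
      rw [h6]
      linarith
    have h8 : F * (1 + 2 * q / d * (t * Y / (1 + t * Y))) ≤
        F + q * (B * (2 * t + t ^ 2 * Y)) :=
      (mul_le_mul_of_nonneg_left h3 hF0).trans (h2.trans h1)
    have h9 : (2 * q * t) * (F / d * Y / (1 + t * Y)) ≤ (2 * q * t) * (B * (1 + t * Y / 2)) := by
      have e1 : (2 * q * t) * (F / d * Y / (1 + t * Y)) =
        F * (2 * q / d * (t * Y / (1 + t * Y))) := by ring
      rw [e1]
      linarith
    exact le_of_mul_le_mul_left h9 (by positivity)
  have l1 : Tendsto (fun t : ℝ => F / d * Y / (1 + t * Y)) (𝓝[>] 0) (𝓝 (F / d * Y)) := by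
    have : ContinuousAt (fun t : ℝ => F / d * Y / (1 + t * Y)) 0 := by
      refine ContinuousAt.div (by fun_prop) (by fun_prop) (by simp)
    simpa using this.tendsto.mono_left nhdsWithin_le_nhds
  have l2 : Tendsto (fun t : ℝ => B * (1 + t * Y / 2)) (𝓝[>] 0) (𝓝 B) := by
    have : ContinuousAt (fun t : ℝ => B * (1 + t * Y / 2)) 0 := by fun_prop
    simpa using this.tendsto.mono_left nhdsWithin_le_nhds
  exact le_of_tendsto_of_tendsto l1 l2 (eventually_mem_nhdsWithin.mono key)

/-- Existence of Lewis weights dominating the sensitivities of a matrix of full column rank. -/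
lemma exists_lewis_weights (k : Matrix ι (Fin d) ℝ) (hk : Function.Injective k.mulVec)
    {q : ℝ} (hq : 0 < q) (hq1 : q ≤ 1) :
    ∃ w : ι → ℝ, (∀ j, 0 ≤ w j) ∧ ∑ j, w j ≤ d ∧
      ∀ v j, ((k *ᵥ v) j ^ 2) ^ q ≤ w j * ∑ l, ((k *ᵥ v) l ^ 2) ^ q := by
  rcases Nat.eq_zero_or_pos d with rfl | hd
  · refine ⟨0, fun _ => le_rfl, by simp, fun v j => ?_⟩
    have : (k *ᵥ v) j = 0 := by simp [mulVec, dotProduct]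
    simp [this, Real.zero_rpow hq.ne']
  obtain ⟨R, hR, hmin⟩ := exists_lewisFun_min k hk hq
  have hd' : (0 : ℝ) < d := by exact_mod_cast hd
  have hterm : ∀ j, 0 ≤ ((k * R) j ⬝ᵥ (k * R) j) ^ q :=
    fun j => Real.rpow_nonneg (dotProduct_self_nonneg_real _) _
  have hF : 0 < lewisFun k q R := by
    refine (Finset.sum_nonneg fun j _ => hterm j).lt_of_ne fun h0 => ?_
    have hz := (Finset.sum_eq_zero_iff_of_nonneg fun j _ => hterm j).1 h0.symm
    have hU : k * R = 0 := by
      funext j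
      have := (Real.rpow_eq_zero (dotProduct_self_nonneg_real _) hq.ne').1 (hz j (Finset.mem_univ j))
      exact dotProduct_self_eq_zero.1 this
    have hR0 := eq_zero_of_mul_eq_zero_of_injective hk hU
    have : Nonempty (Fin d) := ⟨⟨0, hd⟩⟩
    rw [hR0, det_zero] at hR
    exact zero_ne_one hR
  refine ⟨fun j => d / lewisFun k q R * ((k * R) j ⬝ᵥ (k * R) j) ^ q,
    fun j => mul_nonneg (by positivity) (hterm j), ?_, fun v j => ?_⟩
  · rw [← Finset.mul_sum]
    exact (div_mul_cancel₀ (d : ℝ) hF.ne').le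
  set F := lewisFun k q R
  let y := R⁻¹ *ᵥ v
  have hv : ∀ l, (k *ᵥ v) l = (k * R) l ⬝ᵥ y := by
    intro l
    have : k *ᵥ v = (k * R) *ᵥ y := by
      rw [mulVec_mulVec, Matrix.mul_assoc, mul_nonsing_inv R (by simp [hR]), Matrix.mul_one]
    rw [this]
    rfl
  simp only [hv]
  have hY : 0 ≤ y ⬝ᵥ y := dotProduct_self_nonneg_real y
  have hsum : F / d * (y ⬝ᵥ y) ^ q ≤ ∑ l, (((k * R) l ⬝ᵥ y) ^ 2) ^ q := by
    have hS : 0 ≤ ∑ l, (((k * R) l ⬝ᵥ y) ^ 2) ^ q :=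
      Finset.sum_nonneg fun l _ => Real.rpow_nonneg (sq_nonneg _) _
    rcases hY.eq_or_lt with h0 | h0
    · rwa [← h0, Real.zero_rpow hq.ne', mul_zero]
    have h1 := lewisFun_min_mul_dotProduct_le k hq hq1 hd hR hmin y
    have h2 : ∑ l, ((k * R) l ⬝ᵥ (k * R) l) ^ (q - 1) * ((k * R) l ⬝ᵥ y) ^ 2 ≤
        (y ⬝ᵥ y) ^ (1 - q) * ∑ l, (((k * R) l ⬝ᵥ y) ^ 2) ^ q := by
      rw [Finset.mul_sum]
      exact Finset.sum_le_sum fun l _ => rpow_sub_one_mul_sq_le hq1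
        (dotProduct_self_nonneg_real _) hY (dotProduct_sq_le _ _)
    have h3 : (y ⬝ᵥ y) ^ (1 - q) * (y ⬝ᵥ y) ^ q = y ⬝ᵥ y := by
      rw [← Real.rpow_add h0]; simp
    refine le_of_mul_le_mul_left (a := (y ⬝ᵥ y) ^ (1 - q)) ?_ (Real.rpow_pos_of_pos h0 _)
    calc (y ⬝ᵥ y) ^ (1 - q) * (F / d * (y ⬝ᵥ y) ^ q)
        = F / d * ((y ⬝ᵥ y) ^ (1 - q) * (y ⬝ᵥ y) ^ q) := by ring
      _ = F / d * (y ⬝ᵥ y) := by rw [h3]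
      _ ≤ _ := h1.trans h2
  calc (((k * R) j ⬝ᵥ y) ^ 2) ^ q
      ≤ (((k * R) j ⬝ᵥ (k * R) j) * (y ⬝ᵥ y)) ^ q :=
        Real.rpow_le_rpow (sq_nonneg _) (dotProduct_sq_le _ _) hq.le
    _ = ((k * R) j ⬝ᵥ (k * R) j) ^ q * (y ⬝ᵥ y) ^ q :=
        Real.mul_rpow (dotProduct_self_nonneg_real _) hY
    _ = d / F * ((k * R) j ⬝ᵥ (k * R) j) ^ q * (F / d * (y ⬝ᵥ y) ^ q) := by field_simp
    _ ≤ _ := mul_le_mul_of_nonneg_left hsum (mul_nonneg (by positivity) (hterm j))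

lemma sq_rpow_half (x p : ℝ) : (x ^ 2) ^ (p / 2) = |x| ^ p := by
  rw [← sq_abs, ← Real.rpow_natCast, ← Real.rpow_mul (abs_nonneg x)]
  congr 1
  push_cast
  ring

lemma sum_abs_rpow_pos {v : ι → ℝ} (hv : v ≠ 0) (p : ℝ) : 0 < ∑ l, |v l| ^ p := by
  obtain ⟨l, hl⟩ := Function.ne_iff.1 hv
  exact Finset.sum_pos' (fun _ _ => Real.rpow_nonneg (abs_nonneg _) _)
    ⟨l, Finset.mem_univ l, Real.rpow_pos_of_pos (abs_pos.2 hl) _⟩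

/-- The sensitivity quotients of the rows, each at its own test vector, sum to at most `d`. -/
lemma sum_abs_rpow_div_le {p : ℝ} (hp : 0 < p) (hp2 : p ≤ 2) (K : Matrix ι (Fin d) ℝ)
    (v : ι → Fin d → ℝ) (hv : ∀ j, K *ᵥ v j ≠ 0) :
    ∑ j, |(K *ᵥ v j) j| ^ p / ∑ l, |(K *ᵥ v j) l| ^ p ≤ d := by
  have key : ∀ ε : ℝ, 0 < ε →
      ∑ j, |(K *ᵥ v j) j| ^ p / (∑ l, |(K *ᵥ v j) l| ^ p + ∑ i, |ε * v j i| ^ p) ≤ d := by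
    intro ε hε
    let k : Matrix (ι ⊕ Fin d) (Fin d) ℝ := Matrix.fromRows K (ε • 1)
    have hmul : ∀ x, k *ᵥ x = Sum.elim (K *ᵥ x) (ε • x) := by
      intro x
      rw [fromRows_mulVec, smul_mulVec, one_mulVec]
    have hk : Function.Injective k.mulVec := by
      intro x x' h
      rw [hmul, hmul] at h
      ext i
      have := congrFun h (Sum.inr i)
      simpa [hε.ne'] using this
    obtain ⟨w, hw0, hw, hkw⟩ := exists_lewis_weights k hk (q := p / 2) (by linarith) (by linarith)
    refine le_trans ?_ hw
    rw [Fintype.sum_sum_type]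
    refine le_add_of_le_of_nonneg (Finset.sum_le_sum fun j _ => ?_)
      (Finset.sum_nonneg fun _ _ => hw0 _)
    have h := hkw (v j) (Sum.inl j)
    simp only [sq_rpow_half, hmul, Fintype.sum_sum_type, Sum.elim_inl, Sum.elim_inr,
      Pi.smul_apply, smul_eq_mul] at h
    refine (div_le_iff₀ ?_).2 h
    exact add_pos_of_pos_of_nonneg (sum_abs_rpow_pos (hv j) p)
      (Finset.sum_nonneg fun _ _ => Real.rpow_nonneg (abs_nonneg _) _)
  have hlim : Tendsto (fun ε : ℝ =>
      ∑ j, |(K *ᵥ v j) j| ^ p / (∑ l, |(K *ᵥ v j) l| ^ p + ∑ i, |ε * v j i| ^ p)) (𝓝[>] 0)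
      (𝓝 (∑ j, |(K *ᵥ v j) j| ^ p / ∑ l, |(K *ᵥ v j) l| ^ p)) := by
    refine tendsto_finsetSum _ fun j _ => Tendsto.div tendsto_const_nhds ?_
      (sum_abs_rpow_pos (hv j) p).ne'
    have hc : Continuous fun ε : ℝ => ∑ l, |(K *ᵥ v j) l| ^ p + ∑ i, |ε * v j i| ^ p := by
      refine continuous_const.add (continuous_finsetSum _ fun i _ => ?_)
      exact Continuous.rpow_const (by fun_prop) fun _ => Or.inr hp.le
    simpa [Real.zero_rpow hp.ne'] using (hc.tendsto 0).mono_left nhdsWithin_le_nhds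
  exact le_of_tendsto hlim (eventually_mem_nhdsWithin.mono key)

end Lewis

lemma sum_sSup_le_of_forall_sum_le {ι : Type*} [Fintype ι] {S : ι → Set ℝ} {c : ℝ}
    (hne : ∀ j, (S j).Nonempty) (h : ∀ x : ι → ℝ, (∀ j, x j ∈ S j) → ∑ j, x j ≤ c) :
    ∑ j, sSup (S j) ≤ c := by
  have key : ∀ δ : ℝ, 0 < δ → ∑ j, (sSup (S j) - δ) ≤ c := by
    intro δ hδ
    choose x hx hlt using fun j => exists_lt_of_lt_csSup (hne j) (sub_lt_self (sSup (S j)) hδ)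
    exact (Finset.sum_le_sum fun j _ => (hlt j).le).trans (h x hx)
  have hlim : Filter.Tendsto (fun δ : ℝ => ∑ j, (sSup (S j) - δ)) (nhdsWithin 0 (Set.Ioi 0))
      (nhds (∑ j, sSup (S j))) := by
    have hc : Continuous fun δ : ℝ => ∑ j, (sSup (S j) - δ) := by fun_prop
    simpa using (hc.tendsto 0).mono_left nhdsWithin_le_nhds
  exact le_of_tendsto hlim (eventually_mem_nhdsWithin.mono key)

/-- For `1 ≤ p ≤ 2`, the `ℓ_p`-sensitivities of the rows of `K` sum to at most `d`. -/
theorem sum_lpSens_le_of_le_two {n d : ℕ} (p : ℝ) (hp1 : 1 ≤ p) (hp2 : p ≤ 2)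
    (K : Matrix (Fin n) (Fin d) ℝ) :
    ∑ j, lpSens p K j ≤ (d : ℝ) := by
  by_cases hK : ∃ v, K.mulVec v ≠ 0
  · obtain ⟨v₀, hv₀⟩ := hK
    refine sum_sSup_le_of_forall_sum_le (fun j => ⟨_, v₀, hv₀, rfl⟩) fun x hx => ?_
    choose v hv hxv using hx
    simp only [hxv]
    exact sum_abs_rpow_div_le (by linarith) hp2 K v hv
  · have h0 : ∀ j, lpSens p K j = 0 := by
      intro j
      have : {x : ℝ | ∃ v : Fin d → ℝ, K.mulVec v ≠ 0 ∧
          x = |∑ i, K j i * v i| ^ p / ∑ ℓ, |∑ i, K ℓ i * v i| ^ p} = ∅ :=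
        Set.eq_empty_of_forall_notMem fun x ⟨v, hv, _⟩ => hK ⟨v, hv⟩
      rw [lpSens, this, Real.sSup_empty]
    simp [h0]
end

section
/- Let p > 2 and let K be an n×d real matrix with rows K_1,…,K_n. Then the sum over j = 1,…,n of the ℓ_p-sensitivities σ^{(p)}_j(K) is at most d^{p/2}. -/
open Matrix Filter Topology in
theorem Matrix.trace_nonpos_of_det_one_add_smul_le_one {m : Type*} [Fintype m] [DecidableEq m]
    (M : Matrix m m ℝ) (h : ∀ t : ℝ, 0 < t → t ≤ 1 → (1 + t • M).det ≤ 1) : M.trace ≤ 0 := by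
  set P := (1 + (Polynomial.X : Polynomial ℝ) • M.map Polynomial.C).det.divX.divX with hP
  have hlim : Tendsto (fun t : ℝ => M.trace + P.eval t * t) (𝓝[>] 0) (𝓝 M.trace) := by
    have hc : Continuous (fun t : ℝ => M.trace + P.eval t * t) := by fun_prop
    simpa using (hc.tendsto 0).mono_left nhdsWithin_le_nhds
  refine le_of_tendsto hlim ?_
  filter_upwards [Ioc_mem_nhdsGT (zero_lt_one' ℝ)] with t ht
  have := h t ht.1 ht.2
  rw [det_one_add_smul, ← hP] at this
  by_contra! hpos
  nlinarith [mul_pos hpos ht.1]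

open Matrix in
theorem Matrix.PosDef.dotProduct_sq_le {m : Type*} [Fintype m] [DecidableEq m]
    {A : Matrix m m ℝ} (hA : A.PosDef) (k v : m → ℝ) :
    (k ⬝ᵥ v) ^ 2 ≤ (k ⬝ᵥ A⁻¹ *ᵥ k) * (v ⬝ᵥ A *ᵥ v) := by
  have hT : Aᵀ = A := by simpa using hA.isHermitian.eq
  have hsymm : ∀ x y : m → ℝ, x ⬝ᵥ A *ᵥ y = y ⬝ᵥ A *ᵥ x := fun x y => by
    rw [dotProduct_mulVec, dotProduct_comm, ← mulVec_transpose, hT]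
  have hk : A *ᵥ A⁻¹ *ᵥ k = k := by
    rw [mulVec_mulVec, mul_nonsing_inv _ ((isUnit_iff_isUnit_det A).1 hA.isUnit), one_mulVec]
  have h := LinearMap.BilinForm.apply_sq_le_of_symm (Matrix.toBilin' A)
    (fun x => by simpa [toBilin'_apply'] using hA.posSemidef.dotProduct_mulVec_nonneg x)
    ⟨fun x y => by simpa [toBilin'_apply'] using hsymm x y⟩ (A⁻¹ *ᵥ k) v
  simp only [toBilin'_apply', hk, hsymm _ v] at h
  rwa [dotProduct_comm v k, dotProduct_comm (A⁻¹ *ᵥ k)] at h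

/-- The nonnegative part of the unit ball of `ℓ_q`. -/
def nonnegLpBall (ι : Type*) [Fintype ι] (q : ℝ) : Set (ι → ℝ) :=
  {s | (∀ j, 0 ≤ s j) ∧ ∑ j, s j ^ q ≤ 1}

theorem isCompact_nonnegLpBall {ι : Type*} [Fintype ι] {q : ℝ} (hq : 1 ≤ q) :
    IsCompact (nonnegLpBall ι q) := by
  have hq0 : 0 < q := by linarith
  refine (isCompact_Icc (a := (0 : ι → ℝ)) (b := 1)).of_isClosed_subset ?_ ?_
  · have h1 : IsClosed {s : ι → ℝ | ∀ j, 0 ≤ s j} := by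
      simp only [Set.ofPred_forall]
      exact isClosed_iInter fun j => isClosed_le continuous_const (continuous_apply j)
    have h2 : IsClosed {s : ι → ℝ | ∑ j, s j ^ q ≤ 1} :=
      isClosed_le (continuous_finsetSum _ fun j _ =>
        (continuous_apply j).rpow_const fun _ => Or.inr hq0.le) continuous_const
    exact h1.inter h2
  · rintro s ⟨h0, h1⟩
    refine ⟨h0, fun j => ?_⟩
    have hj : s j ^ q ≤ 1 :=
      (Finset.single_le_sum (f := fun j => s j ^ q) (fun i _ => Real.rpow_nonneg (h0 i) q)
        (Finset.mem_univ j)).trans h1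
    by_contra! hlt
    exact absurd (Real.one_lt_rpow hlt hq0) hj.not_gt

theorem convex_nonnegLpBall {ι : Type*} [Fintype ι] {q : ℝ} (hq : 1 ≤ q) :
    Convex ℝ (nonnegLpBall ι q) := by
  rintro s ⟨hs, hs1⟩ t ⟨ht, ht1⟩ a b ha hb hab
  refine ⟨fun j => add_nonneg (mul_nonneg ha (hs j)) (mul_nonneg hb (ht j)), ?_⟩
  calc ∑ j, (a • s + b • t) j ^ q ≤ ∑ j, (a * s j ^ q + b * t j ^ q) :=
        Finset.sum_le_sum fun j _ => (convexOn_rpow hq).2 (hs j) (ht j) ha hb hab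
    _ = a * ∑ j, s j ^ q + b * ∑ j, t j ^ q := by
        rw [Finset.sum_add_distrib, Finset.mul_sum, Finset.mul_sum]
    _ ≤ 1 := by nlinarith

theorem exists_pos_const_mem_nonnegLpBall (ι : Type*) [Fintype ι] {q : ℝ} (hq : 1 ≤ q) :
    ∃ c : ℝ, 0 < c ∧ (fun _ => c) ∈ nonnegLpBall ι q := by
  have hN : (0 : ℝ) < (Fintype.card ι : ℝ) + 1 := by positivity
  refine ⟨1 / ((Fintype.card ι : ℝ) + 1), by positivity, fun _ => by positivity, ?_⟩
  have h1 : 1 / ((Fintype.card ι : ℝ) + 1) ≤ 1 := by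
    rw [div_le_one hN]; linarith [(Fintype.card ι).cast_nonneg (α := ℝ)]
  have h2 := Real.rpow_le_rpow_of_exponent_ge (by positivity) h1 hq
  rw [Real.rpow_one] at h2
  calc ∑ _j : ι, (1 / ((Fintype.card ι : ℝ) + 1)) ^ q
      ≤ ∑ _j : ι, 1 / ((Fintype.card ι : ℝ) + 1) := Finset.sum_le_sum fun _ _ => h2
    _ ≤ 1 := by
        rw [Finset.sum_const, Finset.card_univ, nsmul_eq_mul, mul_one_div, div_le_one hN]
        linarith

theorem sum_rpow_le_of_forall_sum_mul_le {ι : Type*} [Fintype ι] {p q D : ℝ}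
    (hpq : p.HolderConjugate q) {τ : ι → ℝ} (hτ : ∀ j, 0 ≤ τ j)
    (h : ∀ s ∈ nonnegLpBall ι q, ∑ j, τ j * s j ≤ D) : ∑ j, τ j ^ p ≤ D ^ p := by
  lift τ to ι → NNReal using hτ
  obtain ⟨g, hg, hgeq⟩ := (NNReal.isGreatest_Lp Finset.univ τ hpq).1
  have hg' : ∑ j, g j ^ q ≤ 1 := hg
  have hgeq' : ∑ j, τ j * g j = (∑ j, τ j ^ p) ^ (1 / p) := hgeq
  have hD : ∑ j, (τ j : ℝ) * g j ≤ D :=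
    h (fun j => g j) ⟨fun j => (g j).2, by beta_reduce; exact_mod_cast hg'⟩
  have hle : (∑ j, (τ j : ℝ) ^ p) ^ (1 / p) ≤ D := by
    refine le_trans (le_of_eq ?_) hD
    exact_mod_cast hgeq'.symm
  have h0 : 0 ≤ ∑ j, (τ j : ℝ) ^ p := Finset.sum_nonneg fun j _ => by positivity
  calc ∑ j, (τ j : ℝ) ^ p = ((∑ j, (τ j : ℝ) ^ p) ^ (1 / p)) ^ p := by
        rw [← Real.rpow_mul h0, one_div, inv_mul_cancel₀ hpq.pos.ne', Real.rpow_one]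
    _ ≤ D ^ p := Real.rpow_le_rpow (by positivity) hle hpq.nonneg

open Matrix in
/-- Weights maximizing `det (Kᵀ diag(s) K)` over a unit ball of `ℓ_q` give a positive definite
quadratic form whose leverage scores pair to at most the dimension with every point of the ball. -/
theorem exists_posDef_sum_leverage_mul_le {ι m : Type*} [Fintype ι] [DecidableEq ι] [Fintype m]
    [DecidableEq m] {q : ℝ} (hq : 1 ≤ q) (K : Matrix ι m ℝ)
    (hK : Function.Injective K.mulVec) :
    ∃ s ∈ nonnegLpBall ι q, (Kᵀ * diagonal s * K).PosDef ∧
      ∀ t ∈ nonnegLpBall ι q,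
        ∑ j, (K * (Kᵀ * diagonal s * K)⁻¹ * Kᵀ) j j * t j ≤ Fintype.card m := by
  obtain ⟨c, hc, hcmem⟩ := exists_pos_const_mem_nonnegLpBall ι hq
  have hcont : Continuous fun s : ι → ℝ => (Kᵀ * diagonal s * K).det := by fun_prop
  obtain ⟨s, hs, hmax⟩ := (isCompact_nonnegLpBall (ι := ι) hq).exists_isMaxOn ⟨_, hcmem⟩
    hcont.continuousOn
  have hcpos : 0 < (Kᵀ * diagonal (fun _ : ι => c) * K : Matrix m m ℝ).det := by
    have h1 : (Kᵀ * diagonal (fun _ : ι => c) * K : Matrix m m ℝ) = c • (Kᴴ * K) := by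
      rw [← smul_one_eq_diagonal, Matrix.mul_smul, Matrix.smul_mul, Matrix.mul_one]; simp
    rw [h1]
    exact ((PosDef.conjTranspose_mul_self K hK).smul hc).det_pos
  have hdet : 0 < (Kᵀ * diagonal s * K).det := hcpos.trans_le (hmax hcmem)
  have hpd : (Kᵀ * diagonal s * K).PosDef := by
    have hps : (Kᵀ * diagonal s * K).PosSemidef := by
      simpa using (PosSemidef.diagonal (n := ι) (R := ℝ) (d := s) hs.1).conjTranspose_mul_mul_same K
    exact hps.posDef_iff_det_ne_zero.2 hdet.ne'
  refine ⟨s, hs, hpd, fun t ht => ?_⟩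
  set A := Kᵀ * diagonal s * K with hA
  set B := Kᵀ * diagonal t * K with hB
  have hu : IsUnit A.det := hdet.ne'.isUnit
  have htr : (A⁻¹ * B).trace = ∑ j, (K * A⁻¹ * Kᵀ) j j * t j := by
    have : (A⁻¹ * B).trace = (K * A⁻¹ * Kᵀ * diagonal t).trace := by
      rw [hB, ← Matrix.mul_assoc, trace_mul_comm]
      simp only [Matrix.mul_assoc]
    rw [this]
    simp [trace, mul_diagonal]
  have hle : (A⁻¹ * B - 1).trace ≤ 0 := by
    refine trace_nonpos_of_det_one_add_smul_le_one _ fun r hr0 hr1 => ?_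
    have hmem := convex_nonnegLpBall hq hs ht (sub_nonneg.2 hr1) hr0.le (by ring)
    have hm := hmax hmem
    have hcomb : Kᵀ * diagonal ((1 - r) • s + r • t) * K = A * (1 + r • (A⁻¹ * B - 1)) := by
      have hd : diagonal ((1 - r) • s + r • t) = (1 - r) • diagonal s + r • diagonal t := by
        rw [← diagonal_smul, ← diagonal_smul, diagonal_add]
        rfl
      rw [hd]
      have hAB : A * (A⁻¹ * B) = B := mul_nonsing_inv_cancel_left _ _ hu
      simp only [Matrix.mul_add, Matrix.add_mul, Matrix.mul_smul, Matrix.smul_mul, Matrix.mul_sub,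
        hAB, Matrix.mul_one, ← hA, ← hB]
      module
    simp only [Set.mem_ofPred_eq, hcomb, det_mul, ← hA] at hm
    exact le_of_mul_le_mul_left (by simpa using hm) hdet
  rw [trace_sub, trace_one, htr] at hle
  linarith

open Matrix in
theorem exists_bound_rpow_of_injective {ι m : Type*} [Fintype ι] [Fintype m] {p : ℝ} (hp : 2 < p)
    (K : Matrix ι m ℝ) (hK : Function.Injective K.mulVec) :
    ∃ c : ι → ℝ, (∀ j, 0 ≤ c j) ∧ ∑ j, c j ≤ (Fintype.card m : ℝ) ^ (p / 2) ∧
      ∀ v j, |(K *ᵥ v) j| ^ p ≤ c j * ∑ l, |(K *ᵥ v) l| ^ p := by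
  classical
  have hp2 : 1 < p / 2 := by linarith
  obtain ⟨q, hpq⟩ : ∃ q, (p / 2).HolderConjugate q := ⟨_, Real.HolderConjugate.conjExponent hp2⟩
  obtain ⟨s, hs, hpd, hτ⟩ := exists_posDef_sum_leverage_mul_le hpq.symm.lt.le K hK
  set A := Kᵀ * diagonal s * K with hA
  have hτ0 : ∀ j, 0 ≤ (K * A⁻¹ * Kᵀ) j j := fun j => by
    simpa using (hpd.inv.posSemidef.mul_mul_conjTranspose_same K).diag_nonneg (i := j)
  refine ⟨fun j => (K * A⁻¹ * Kᵀ) j j ^ (p / 2), fun j => Real.rpow_nonneg (hτ0 j) _,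
    sum_rpow_le_of_forall_sum_mul_le hpq hτ0 hτ, fun v j => ?_⟩
  have habs : ∀ x : ℝ, (x ^ 2) ^ (p / 2) = |x| ^ p := fun x => by
    rw [← sq_abs, ← Real.rpow_natCast, ← Real.rpow_mul (abs_nonneg x)]
    congr 1
    push_cast
    ring
  have hS : 0 ≤ ∑ l, |(K *ᵥ v) l| ^ p := Finset.sum_nonneg fun l _ => by positivity
  have hcs : ((K *ᵥ v) j) ^ 2 ≤ (K * A⁻¹ * Kᵀ) j j * (v ⬝ᵥ A *ᵥ v) := by
    have h1 : (K * A⁻¹ * Kᵀ) j j = K j ⬝ᵥ A⁻¹ *ᵥ K j := by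
      rw [Matrix.mul_assoc]
      rfl
    rw [h1]
    exact hpd.dotProduct_sq_le (K j) v
  have hform : v ⬝ᵥ A *ᵥ v = ∑ l, s l * ((K *ᵥ v) l) ^ 2 := by
    rw [hA, ← mulVec_mulVec, ← mulVec_mulVec, dotProduct_mulVec, vecMul_transpose, dotProduct]
    refine Finset.sum_congr rfl fun l _ => ?_
    rw [mulVec_diagonal]
    ring
  have hholder : v ⬝ᵥ A *ᵥ v ≤ (∑ l, |(K *ᵥ v) l| ^ p) ^ (1 / (p / 2)) := by
    rw [hform]
    refine (Real.inner_le_Lp_mul_Lq_of_nonneg Finset.univ hpq.symm (fun l _ => hs.1 l)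
      (fun l _ => sq_nonneg _)).trans ?_
    simp only [habs]
    exact mul_le_of_le_one_left (by positivity) (Real.rpow_le_one
      (Finset.sum_nonneg fun l _ => Real.rpow_nonneg (hs.1 l) _) hs.2
      (one_div_nonneg.2 hpq.symm.nonneg))
  calc |(K *ᵥ v) j| ^ p = (((K *ᵥ v) j) ^ 2) ^ (p / 2) := (habs _).symm
    _ ≤ ((K * A⁻¹ * Kᵀ) j j * (∑ l, |(K *ᵥ v) l| ^ p) ^ (1 / (p / 2))) ^ (p / 2) :=
        Real.rpow_le_rpow (sq_nonneg _)
          (hcs.trans (mul_le_mul_of_nonneg_left hholder (hτ0 j))) hpq.nonneg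
    _ = (K * A⁻¹ * Kᵀ) j j ^ (p / 2) * ∑ l, |(K *ᵥ v) l| ^ p := by
        rw [Real.mul_rpow (hτ0 j) (by positivity), ← Real.rpow_mul hS, one_div,
          inv_mul_cancel₀ hpq.pos.ne', Real.rpow_one]

open Matrix in
theorem exists_bound_rpow {ι m : Type*} [Fintype ι] [Fintype m] {p : ℝ} (hp : 2 < p)
    (K : Matrix ι m ℝ) :
    ∃ c : ι → ℝ, (∀ j, 0 ≤ c j) ∧ ∑ j, c j ≤ (Fintype.card m : ℝ) ^ (p / 2) ∧
      ∀ v j, |(K *ᵥ v) j| ^ p ≤ c j * ∑ l, |(K *ᵥ v) l| ^ p := by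
  let V := LinearMap.range K.mulVecLin
  let b := Module.finBasis ℝ V
  let L : Matrix ι (Fin (Module.finrank ℝ V)) ℝ := Matrix.of fun j i => (b i : ι → ℝ) j
  have hL : ∀ x, L *ᵥ x = (b.equivFun.symm x : ι → ℝ) := fun x => by
    ext j
    simp [L, mulVec, dotProduct, Module.Basis.equivFun_symm_apply, Finset.sum_apply, mul_comm]
  have hinj : Function.Injective L.mulVec := fun x y hxy => by
    simp only [hL] at hxy
    exact b.equivFun.symm.injective (Subtype.ext hxy)
  obtain ⟨c, hc0, hc, hb⟩ := exists_bound_rpow_of_injective hp L hinj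
  refine ⟨c, hc0, hc.trans ?_, fun v => ?_⟩
  · refine Real.rpow_le_rpow (by positivity) ?_ (by linarith)
    have := LinearMap.finrank_range_le K.mulVecLin
    rw [Module.finrank_fintype_fun_eq_card] at this
    rw [Fintype.card_fin]
    exact_mod_cast this
  · have hv : L *ᵥ b.equivFun ⟨K *ᵥ v, v, rfl⟩ = K *ᵥ v := by rw [hL]; simp
    simpa only [hv] using hb (b.equivFun ⟨K *ᵥ v, v, rfl⟩)

/-- For `p > 2`, the `ℓ_p`-sensitivities of the rows of `K` sum to at most `d^{p/2}`. -/
theorem sum_lpSens_le_of_gt_two {n d : ℕ} (p : ℝ) (hp : 2 < p)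
    (K : Matrix (Fin n) (Fin d) ℝ) :
    ∑ j, lpSens p K j ≤ (d : ℝ) ^ (p / 2) := by
  obtain ⟨c, hc0, hc, hb⟩ := exists_bound_rpow hp K
  rw [Fintype.card_fin] at hc
  refine (Finset.sum_le_sum fun j _ => ?_).trans hc
  refine Real.sSup_le ?_ (hc0 j)
  rintro x ⟨v, -, rfl⟩
  exact div_le_of_le_mul₀ (Finset.sum_nonneg fun l _ => by positivity) (hc0 j) (hb v j)
end
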